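/- Let Ω ⊆ ℝ³ be open and let f : Ω → ℝ³ be a smooth conformal map. Then the function φ = (1/2)·ln J_F is CR-pluriharmonic on Ω, i.e. it satisfies Z²Z̄φ = 0 on Ω. -/

import Mathlib

noncomputable section

open Complex

/-- The underlying space of the first Heisenberg group: ℝ³ with coordinates (x, y, t). -/
abbrev Heis : Type := ℝ × ℝ × ℝ

/-- The left-invariant vector field X = ∂/∂x + 2y ∂/∂t, as a derivation. -/
def XD {E : Type*} [NormedAddCommGroup E] [NormedSpace ℝ E] (u : Heis → E) (p : Heis) : E :=
  fderiv ℝ u p (1, 0, 2 * p.2.1)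

/-- The left-invariant vector field Y = ∂/∂y − 2x ∂/∂t, as a derivation. -/
def YD {E : Type*} [NormedAddCommGroup E] [NormedSpace ℝ E] (u : Heis → E) (p : Heis) : E :=
  fderiv ℝ u p (0, 1, -(2 * p.1))

/-- The vector field T = ∂/∂t, as a derivation. -/
def TD {E : Type*} [NormedAddCommGroup E] [NormedSpace ℝ E] (u : Heis → E) (p : Heis) : E :=
  fderiv ℝ u p (0, 0, 1)

/-- Z = (X − iY)/2. -/
def ZD (u : Heis → ℂ) (p : Heis) : ℂ := (XD u p - Complex.I * YD u p) / 2

/-- Z̄ = (X + iY)/2. -/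
def ZbD (u : Heis → ℂ) (p : Heis) : ℂ := (XD u p + Complex.I * YD u p) / 2

/-- The complexification F = f₁ + i f₂ of the horizontal components. -/
def CF (f1 f2 : Heis → ℝ) : Heis → ℂ := fun p => (f1 p : ℂ) + (f2 p : ℂ) * Complex.I

/-- Complexification of a real-valued function. -/
def Cplx (u : Heis → ℝ) : Heis → ℂ := fun p => (u p : ℂ)

/-- The horizontal Jacobian J_F = Xf₁·Yf₂ − Yf₁·Xf₂. -/
def JF (f1 f2 : Heis → ℝ) (p : Heis) : ℝ := XD f1 p * YD f2 p - YD f1 p * XD f2 p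

/-- The contact equations on Ω. -/
def ContactOn (f1 f2 f3 : Heis → ℝ) (Ω : Set Heis) : Prop :=
  ∀ p ∈ Ω, XD f3 p - 2 * f2 p * XD f1 p + 2 * f1 p * XD f2 p = 0 ∧
           YD f3 p - 2 * f2 p * YD f1 p + 2 * f1 p * YD f2 p = 0

/-- f = (f₁,f₂,f₃) is conformal on Ω: smooth, contact, J_F > 0, and the conformality
equations hold. -/
def ConformalOn (f1 f2 f3 : Heis → ℝ) (Ω : Set Heis) : Prop :=
  ContDiffOn ℝ (⊤ : ℕ∞) f1 Ω ∧ ContDiffOn ℝ (⊤ : ℕ∞) f2 Ω ∧ ContDiffOn ℝ (⊤ : ℕ∞) f3 Ω ∧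
  ContactOn f1 f2 f3 Ω ∧ (∀ p ∈ Ω, 0 < JF f1 f2 p) ∧
  ∀ p ∈ Ω, (XD f1 p) ^ 2 + (XD f2 p) ^ 2 = (YD f1 p) ^ 2 + (YD f2 p) ^ 2 ∧
           XD f1 p * YD f1 p + XD f2 p * YD f2 p = 0

/-- The sub-Laplacian Δ_H = X² + Y². -/
def LapH {E : Type*} [NormedAddCommGroup E] [NormedSpace ℝ E] (u : Heis → E) (p : Heis) : E :=
  XD (XD u) p + YD (YD u) p

/-- The CR Schwarzian derivative S_CR(f) = (1/2)·J_F·Z²(J_F⁻¹). -/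
def SCR (f1 f2 : Heis → ℝ) (p : Heis) : ℂ :=
  (1 / 2 : ℂ) * (JF f1 f2 p : ℂ) * ZD (ZD (fun q => (((JF f1 f2 q)⁻¹ : ℝ) : ℂ))) p

/-- The classical type Schwarzian S_CL(f) = Z³F/ZF − (3/2)(Z²F/ZF)². -/
def SCL (f1 f2 : Heis → ℝ) (p : Heis) : ℂ :=
  ZD (ZD (ZD (CF f1 f2))) p / ZD (CF f1 f2) p
    - (3 / 2 : ℂ) * (ZD (ZD (CF f1 f2)) p / ZD (CF f1 f2) p) ^ 2

/-- The Preschwarzian Pf = Z(ln J_F). -/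
def PS (f1 f2 : Heis → ℝ) (p : Heis) : ℂ := ZD (Cplx (fun q => Real.log (JF f1 f2 q))) p

/-- The map (f₁,f₂,f₃) packaged as a map Heis → Heis. -/
def Fmap (f1 f2 f3 : Heis → ℝ) (p : Heis) : Heis := (f1 p, f2 p, f3 p)

section DerivationRules

variable {E : Type*} [NormedAddCommGroup E] [NormedSpace ℝ E] {Ω : Set Heis}

theorem contDiffOn_fderiv_apply (hΩ : IsOpen Ω) {u : Heis → E} {w : Heis → Heis}
    (hu : ContDiffOn ℝ (⊤ : ℕ∞) u Ω) (hw : ContDiff ℝ (⊤ : ℕ∞) w) :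
    ContDiffOn ℝ (⊤ : ℕ∞) (fun q => fderiv ℝ u q (w q)) Ω :=
  (hu.fderiv_of_isOpen hΩ (by simp)).clm_apply hw.contDiffOn

theorem ContDiffOn.XD (hΩ : IsOpen Ω) {u : Heis → E} (hu : ContDiffOn ℝ (⊤ : ℕ∞) u Ω) :
    ContDiffOn ℝ (⊤ : ℕ∞) (XD u) Ω :=
  contDiffOn_fderiv_apply hΩ hu (by fun_prop)

theorem ContDiffOn.YD (hΩ : IsOpen Ω) {u : Heis → E} (hu : ContDiffOn ℝ (⊤ : ℕ∞) u Ω) :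
    ContDiffOn ℝ (⊤ : ℕ∞) (YD u) Ω :=
  contDiffOn_fderiv_apply hΩ hu (by fun_prop)

theorem ContDiffOn.TD (hΩ : IsOpen Ω) {u : Heis → E} (hu : ContDiffOn ℝ (⊤ : ℕ∞) u Ω) :
    ContDiffOn ℝ (⊤ : ℕ∞) (TD u) Ω :=
  contDiffOn_fderiv_apply hΩ hu (by fun_prop)

theorem ContDiffOn.ZD (hΩ : IsOpen Ω) {u : Heis → ℂ} (hu : ContDiffOn ℝ (⊤ : ℕ∞) u Ω) :
    ContDiffOn ℝ (⊤ : ℕ∞) (ZD u) Ω :=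
  ((hu.XD hΩ).sub (contDiffOn_const.mul (hu.YD hΩ))).div_const 2

theorem ContDiffOn.ZbD (hΩ : IsOpen Ω) {u : Heis → ℂ} (hu : ContDiffOn ℝ (⊤ : ℕ∞) u Ω) :
    ContDiffOn ℝ (⊤ : ℕ∞) (ZbD u) Ω :=
  ((hu.XD hΩ).add (contDiffOn_const.mul (hu.YD hΩ))).div_const 2

theorem ContDiffOn.differentiableAt_of_isOpen (hΩ : IsOpen Ω) {u : Heis → E}
    (hu : ContDiffOn ℝ (⊤ : ℕ∞) u Ω) {p : Heis} (hp : p ∈ Ω) : DifferentiableAt ℝ u p :=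
  (hu.contDiffAt (hΩ.mem_nhds hp)).differentiableAt (by simp)

/-- The commutator of the derivations along `v` and `w` is the derivation along `[v, w]`. -/
theorem fderiv_apply_commutator (hΩ : IsOpen Ω) {u : Heis → E} {v w : Heis → Heis}
    (hu : ContDiffOn ℝ (⊤ : ℕ∞) u Ω) {p : Heis} (hp : p ∈ Ω)
    (hv : DifferentiableAt ℝ v p) (hw : DifferentiableAt ℝ w p) :
    fderiv ℝ (fun q => fderiv ℝ u q (w q)) p (v p)
      - fderiv ℝ (fun q => fderiv ℝ u q (v q)) p (w p)
      = fderiv ℝ u p (VectorField.lieBracket ℝ v w p) := by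
  have hd : DifferentiableAt ℝ (fderiv ℝ u) p :=
    (hu.fderiv_of_isOpen hΩ (m := (⊤ : ℕ∞)) (by simp)).differentiableAt_of_isOpen hΩ hp
  have hs : IsSymmSndFDerivAt ℝ u p :=
    (hu.contDiffAt (hΩ.mem_nhds hp)).isSymmSndFDerivAt (by
      rw [minSmoothness_of_isRCLikeNormedField]; exact WithTop.coe_le_coe.mpr le_top)
  rw [fderiv_clm_apply hd hw, fderiv_clm_apply hd hv]
  simp [VectorField.lieBracket, hs (v p) (w p)]

theorem hasFDerivAt_fieldX (p : Heis) :
    HasFDerivAt (fun q : Heis => ((1, 0, 2 * q.2.1) : Heis))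
      ((0 : Heis →L[ℝ] ℝ).prod ((0 : Heis →L[ℝ] ℝ).prod
        ((2 : ℝ) • (ContinuousLinearMap.fst ℝ ℝ ℝ ∘L ContinuousLinearMap.snd ℝ ℝ (ℝ × ℝ))))) p :=
  (hasFDerivAt_const _ _).prodMk ((hasFDerivAt_const _ _).prodMk
    ((hasFDerivAt_fst.comp p hasFDerivAt_snd).const_mul 2))

theorem hasFDerivAt_fieldY (p : Heis) :
    HasFDerivAt (fun q : Heis => ((0, 1, -(2 * q.1)) : Heis))
      ((0 : Heis →L[ℝ] ℝ).prod ((0 : Heis →L[ℝ] ℝ).prod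
        (-((2 : ℝ) • ContinuousLinearMap.fst ℝ ℝ (ℝ × ℝ))))) p :=
  (hasFDerivAt_const _ _).prodMk ((hasFDerivAt_const _ _).prodMk
    ((hasFDerivAt_fst.const_mul 2).neg))

theorem XD_YD_sub_YD_XD (hΩ : IsOpen Ω) {u : Heis → E} (hu : ContDiffOn ℝ (⊤ : ℕ∞) u Ω)
    {p : Heis} (hp : p ∈ Ω) : XD (YD u) p - YD (XD u) p = (-4 : ℝ) • TD u p := by
  have h := fderiv_apply_commutator hΩ hu hp (hasFDerivAt_fieldX p).differentiableAt
    (hasFDerivAt_fieldY p).differentiableAt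
  refine h.trans ?_
  rw [VectorField.lieBracket, (hasFDerivAt_fieldX p).fderiv, (hasFDerivAt_fieldY p).fderiv, TD,
    ← map_smul]
  congr 1
  ext <;> simp
  norm_num

theorem XD_TD_comm (hΩ : IsOpen Ω) {u : Heis → E} (hu : ContDiffOn ℝ (⊤ : ℕ∞) u Ω)
    {p : Heis} (hp : p ∈ Ω) : XD (TD u) p = TD (XD u) p := by
  have h := fderiv_apply_commutator (w := fun _ => ((0, 0, 1) : Heis)) hΩ hu hp
    (hasFDerivAt_fieldX p).differentiableAt (differentiableAt_const _)
  refine sub_eq_zero.mp (h.trans ?_)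
  rw [VectorField.lieBracket, (hasFDerivAt_fieldX p).fderiv]
  convert map_zero (fderiv ℝ u p)
  ext <;> simp

theorem YD_TD_comm (hΩ : IsOpen Ω) {u : Heis → E} (hu : ContDiffOn ℝ (⊤ : ℕ∞) u Ω)
    {p : Heis} (hp : p ∈ Ω) : YD (TD u) p = TD (YD u) p := by
  have h := fderiv_apply_commutator (w := fun _ => ((0, 0, 1) : Heis)) hΩ hu hp
    (hasFDerivAt_fieldY p).differentiableAt (differentiableAt_const _)
  refine sub_eq_zero.mp (h.trans ?_)
  rw [VectorField.lieBracket, (hasFDerivAt_fieldY p).fderiv]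
  convert map_zero (fderiv ℝ u p)
  ext <;> simp

theorem fderiv_eq_of_eqOn (hΩ : IsOpen Ω) {u v : Heis → E} (h : Set.EqOn u v Ω) {p : Heis}
    (hp : p ∈ Ω) : fderiv ℝ u p = fderiv ℝ v p :=
  (h.eventuallyEq_of_mem (hΩ.mem_nhds hp)).fderiv_eq

theorem ZD_congr (hΩ : IsOpen Ω) {u v : Heis → ℂ} (h : Set.EqOn u v Ω) :
    Set.EqOn (ZD u) (ZD v) Ω := fun p hp => by
  simp only [ZD, XD, YD, fderiv_eq_of_eqOn hΩ h hp]

theorem ZbD_congr (hΩ : IsOpen Ω) {u v : Heis → ℂ} (h : Set.EqOn u v Ω) :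
    Set.EqOn (ZbD u) (ZbD v) Ω := fun p hp => by
  simp only [ZbD, XD, YD, fderiv_eq_of_eqOn hΩ h hp]

theorem TD_congr (hΩ : IsOpen Ω) {u v : Heis → ℂ} (h : Set.EqOn u v Ω) :
    Set.EqOn (TD u) (TD v) Ω := fun p hp => by
  simp only [TD, fderiv_eq_of_eqOn hΩ h hp]

variable {u v : Heis → ℂ} {p : Heis}

theorem ZD_add (hu : DifferentiableAt ℝ u p) (hv : DifferentiableAt ℝ v p) :
    ZD (fun q => u q + v q) p = ZD u p + ZD v p := by
  simp only [ZD, XD, YD, fderiv_fun_add hu hv, add_apply]; ring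

theorem ZD_sub (hu : DifferentiableAt ℝ u p) (hv : DifferentiableAt ℝ v p) :
    ZD (fun q => u q - v q) p = ZD u p - ZD v p := by
  simp only [ZD, XD, YD, fderiv_fun_sub hu hv, sub_apply]; ring

theorem ZbD_sub (hu : DifferentiableAt ℝ u p) (hv : DifferentiableAt ℝ v p) :
    ZbD (fun q => u q - v q) p = ZbD u p - ZbD v p := by
  simp only [ZbD, XD, YD, fderiv_fun_sub hu hv, sub_apply]; ring

theorem ZD_mul (hu : DifferentiableAt ℝ u p) (hv : DifferentiableAt ℝ v p) :
    ZD (fun q => u q * v q) p = ZD u p * v p + u p * ZD v p := by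
  simp only [ZD, XD, YD, fderiv_fun_mul hu hv, add_apply,
    smul_apply, smul_eq_mul]; ring

theorem ZbD_mul (hu : DifferentiableAt ℝ u p) (hv : DifferentiableAt ℝ v p) :
    ZbD (fun q => u q * v q) p = ZbD u p * v p + u p * ZbD v p := by
  simp only [ZbD, XD, YD, fderiv_fun_mul hu hv, add_apply,
    smul_apply, smul_eq_mul]; ring

theorem TD_mul (hu : DifferentiableAt ℝ u p) (hv : DifferentiableAt ℝ v p) :
    TD (fun q => u q * v q) p = TD u p * v p + u p * TD v p := by
  simp only [TD, fderiv_fun_mul hu hv, add_apply,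
    smul_apply, smul_eq_mul]; ring

theorem ZD_const_mul (c : ℂ) (hu : DifferentiableAt ℝ u p) :
    ZD (fun q => c * u q) p = c * ZD u p := by
  simp only [ZD, XD, YD, fderiv_const_mul hu, smul_apply, smul_eq_mul]; ring

theorem ZbD_const_mul (c : ℂ) (hu : DifferentiableAt ℝ u p) :
    ZbD (fun q => c * u q) p = c * ZbD u p := by
  simp only [ZbD, XD, YD, fderiv_const_mul hu, smul_apply, smul_eq_mul]; ring

theorem TD_const_mul (c : ℂ) (hu : DifferentiableAt ℝ u p) :
    TD (fun q => c * u q) p = c * TD u p := by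
  simp only [TD, fderiv_const_mul hu, smul_apply, smul_eq_mul]

theorem ZD_zero : ZD (fun _ => 0) p = 0 := by simp [ZD, XD, YD]

theorem TD_zero : TD (fun _ => (0 : ℂ)) p = 0 := by simp [TD]

theorem fderiv_conj_apply (hu : DifferentiableAt ℝ u p) (w : Heis) :
    fderiv ℝ (fun q => (starRingEnd ℂ) (u q)) p w = (starRingEnd ℂ) (fderiv ℝ u p w) := by
  have h := (Complex.conjCLE : ℂ →L[ℝ] ℂ).hasFDerivAt.comp p hu.hasFDerivAt
  have e : (fun q => (starRingEnd ℂ) (u q)) = (Complex.conjCLE : ℂ →L[ℝ] ℂ) ∘ u := by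
    ext q; simp
  rw [e, h.fderiv]
  simp

theorem ZD_conj (hu : DifferentiableAt ℝ u p) :
    ZD (fun q => (starRingEnd ℂ) (u q)) p = (starRingEnd ℂ) (ZbD u p) := by
  simp [ZD, ZbD, XD, YD, fderiv_conj_apply hu, sub_eq_add_neg, Complex.conj_ofNat]

theorem ZbD_conj (hu : DifferentiableAt ℝ u p) :
    ZbD (fun q => (starRingEnd ℂ) (u q)) p = (starRingEnd ℂ) (ZD u p) := by
  simp [ZD, ZbD, XD, YD, fderiv_conj_apply hu, Complex.conj_ofNat]

theorem fderiv_clog_apply (hu : DifferentiableAt ℝ u p) (h : u p ∈ slitPlane) (w : Heis) :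
    fderiv ℝ (fun q => Complex.log (u q)) p w = fderiv ℝ u p w / u p := by
  have hl : HasFDerivAt (fun q => Complex.log (u q)) _ p :=
    (Complex.hasStrictFDerivAt_log_real h).hasFDerivAt.comp p hu.hasFDerivAt
  rw [hl.fderiv]
  simp [div_eq_inv_mul]

theorem ZD_log (hu : DifferentiableAt ℝ u p) (h : u p ∈ slitPlane) :
    ZD (fun q => Complex.log (u q)) p = ZD u p / u p := by
  simp only [ZD, XD, YD, fderiv_clog_apply hu h]; ring

theorem ZbD_log (hu : DifferentiableAt ℝ u p) (h : u p ∈ slitPlane) :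
    ZbD (fun q => Complex.log (u q)) p = ZbD u p / u p := by
  simp only [ZbD, XD, YD, fderiv_clog_apply hu h]; ring

theorem ZD_ZbD_sub_ZbD_ZD (hΩ : IsOpen Ω) (hu : ContDiffOn ℝ (⊤ : ℕ∞) u Ω) (hp : p ∈ Ω) :
    ZD (ZbD u) p - ZbD (ZD u) p = -2 * I * TD u p := by
  have hX := (hu.XD hΩ).differentiableAt_of_isOpen hΩ hp
  have hY := (hu.YD hΩ).differentiableAt_of_isOpen hΩ hp
  have e1 : ZbD u = fun q => (1 / 2 : ℂ) * (XD u q + I * YD u q) := by ext q; rw [ZbD]; ring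
  have e2 : ZD u = fun q => (1 / 2 : ℂ) * (XD u q - I * YD u q) := by ext q; rw [ZD]; ring
  have h := XD_YD_sub_YD_XD hΩ hu hp
  have hIY := hY.const_mul I
  rw [e1, e2, ZD_const_mul _ (hX.fun_add hIY), ZbD_const_mul _ (hX.fun_sub hIY), ZD_add hX hIY,
    ZbD_sub hX hIY, ZD_const_mul _ hY, ZbD_const_mul _ hY]
  simp only [ZD, ZbD]
  rw [Complex.real_smul] at h
  push_cast at h
  linear_combination (I / 2) * h

theorem ZD_TD_comm (hΩ : IsOpen Ω) (hu : ContDiffOn ℝ (⊤ : ℕ∞) u Ω) (hp : p ∈ Ω) :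
    ZD (TD u) p = TD (ZD u) p := by
  have hX := (hu.XD hΩ).differentiableAt_of_isOpen hΩ hp
  have hY := (hu.YD hΩ).differentiableAt_of_isOpen hΩ hp
  have e : ZD u = fun q => (1 / 2 : ℂ) * (XD u q - I * YD u q) := by ext q; rw [ZD]; ring
  have hIY := hY.const_mul I
  rw [e, TD_const_mul _ (hX.fun_sub hIY), ZD, XD_TD_comm hΩ hu hp, YD_TD_comm hΩ hu hp]
  simp only [TD, fderiv_fun_sub hX hIY, fderiv_const_mul hY, smul_apply,
    sub_apply, smul_eq_mul]
  ring

/-- `[Z, [Z, Z̄]] = 0`. -/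
theorem ZD_commutator (hΩ : IsOpen Ω) (hu : ContDiffOn ℝ (⊤ : ℕ∞) u Ω) (hp : p ∈ Ω) :
    ZD (ZD (ZbD u)) p - ZD (ZbD (ZD u)) p = ZD (ZbD (ZD u)) p - ZbD (ZD (ZD u)) p := by
  have h1 := ZD_congr hΩ (u := fun q => ZD (ZbD u) q - ZbD (ZD u) q)
    (v := fun q => -2 * I * TD u q) (fun q hq => ZD_ZbD_sub_ZbD_ZD hΩ hu hq) hp
  rw [ZD_sub (((hu.ZbD hΩ).ZD hΩ).differentiableAt_of_isOpen hΩ hp)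
      (((hu.ZD hΩ).ZbD hΩ).differentiableAt_of_isOpen hΩ hp),
    ZD_const_mul _ ((hu.TD hΩ).differentiableAt_of_isOpen hΩ hp), ZD_TD_comm hΩ hu hp] at h1
  rw [h1, ZD_ZbD_sub_ZbD_ZD hΩ (hu.ZD hΩ) hp]

end DerivationRules

/-- If `ZL = 4Zφ` and `Z̄L = -2Z̄φ` for some function `L`, then `φ` is CR-pluriharmonic. -/
theorem ZD_ZD_ZbD_eq_zero_of_potential {Ω : Set Heis} (hΩ : IsOpen Ω) {φ L : Heis → ℂ}
    (hφ : ContDiffOn ℝ (⊤ : ℕ∞) φ Ω) (hL : ContDiffOn ℝ (⊤ : ℕ∞) L Ω)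
    (hZ : Set.EqOn (ZD L) (fun q => 4 * ZD φ q) Ω)
    (hZb : Set.EqOn (ZbD L) (fun q => -2 * ZbD φ q) Ω) {p : Heis} (hp : p ∈ Ω) :
    ZD (ZD (ZbD φ)) p = 0 := by
  have hA : Set.EqOn (ZD (ZbD L)) (fun q => -2 * ZD (ZbD φ) q) Ω := fun q hq => by
    rw [ZD_congr hΩ hZb hq, ZD_const_mul _ ((hφ.ZbD hΩ).differentiableAt_of_isOpen hΩ hq)]
  have hB : Set.EqOn (ZbD (ZD L)) (fun q => 4 * ZbD (ZD φ) q) Ω := fun q hq => by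
    rw [ZbD_congr hΩ hZ hq, ZbD_const_mul _ ((hφ.ZD hΩ).differentiableAt_of_isOpen hΩ hq)]
  have hC : Set.EqOn (ZD (ZD L)) (fun q => 4 * ZD (ZD φ) q) Ω := fun q hq => by
    rw [ZD_congr hΩ hZ hq, ZD_const_mul _ ((hφ.ZD hΩ).differentiableAt_of_isOpen hΩ hq)]
  have h := ZD_commutator hΩ hL hp
  rw [ZD_congr hΩ hA hp, ZD_congr hΩ hB hp, ZbD_congr hΩ hC hp,
    ZD_const_mul _ (((hφ.ZbD hΩ).ZD hΩ).differentiableAt_of_isOpen hΩ hp),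
    ZD_const_mul _ (((hφ.ZD hΩ).ZbD hΩ).differentiableAt_of_isOpen hΩ hp),
    ZbD_const_mul _ (((hφ.ZD hΩ).ZD hΩ).differentiableAt_of_isOpen hΩ hp)] at h
  linear_combination (-1 / 6 : ℂ) * h + (2 / 3 : ℂ) * ZD_commutator hΩ hφ hp

/-- The third order consequence of the contact equations, in complex form: `F` is the horizontal
part of the map, `H` its conjugate and `g` its vertical part. -/
theorem ZD_ZD_mul_of_contact {Ω : Set Heis} (hΩ : IsOpen Ω) {F H g : Heis → ℂ}
    (hF : ContDiffOn ℝ (⊤ : ℕ∞) F Ω) (hH : ContDiffOn ℝ (⊤ : ℕ∞) H Ω)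
    (hg : ContDiffOn ℝ (⊤ : ℕ∞) g Ω)
    (hZbF : Set.EqOn (ZbD F) (fun _ => 0) Ω) (hZH : Set.EqOn (ZD H) (fun _ => 0) Ω)
    (hZg : Set.EqOn (ZD g) (fun q => I * (H q * ZD F q)) Ω)
    (hZbg : Set.EqOn (ZbD g) (fun q => -I * (F q * ZbD H q)) Ω) {p : Heis} (hp : p ∈ Ω) :
    ZD (ZD F) p * ZbD H p = -2 * (ZD F p * ZD (ZbD H) p) := by
  have dF {q} (hq : q ∈ Ω) := hF.differentiableAt_of_isOpen hΩ hq
  have dH {q} (hq : q ∈ Ω) := hH.differentiableAt_of_isOpen hΩ hq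
  have da {q} (hq : q ∈ Ω) := (hF.ZD hΩ).differentiableAt_of_isOpen hΩ hq
  have db {q} (hq : q ∈ Ω) := (hH.ZbD hΩ).differentiableAt_of_isOpen hΩ hq
  have dTF := (hF.TD hΩ).differentiableAt_of_isOpen hΩ hp
  have dTH := (hH.TD hΩ).differentiableAt_of_isOpen hΩ hp
  have hTH : Set.EqOn (ZD (ZbD H)) (fun q => -2 * I * TD H q) Ω := fun q hq => by
    have h := ZD_ZbD_sub_ZbD_ZD hΩ hH hq
    have h0 : ZbD (ZD H) q = 0 := by
      rw [ZbD_congr hΩ hZH hq]; simp [ZbD, XD, YD]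
    rw [h0, sub_zero] at h
    exact h
  have hTF : Set.EqOn (ZbD (ZD F)) (fun q => 2 * I * TD F q) Ω := fun q hq => by
    have h := ZD_ZbD_sub_ZbD_ZD hΩ hF hq
    rw [ZD_congr hΩ hZbF hq, ZD_zero] at h
    linear_combination -h
  have hTg : Set.EqOn (TD g)
      (fun q => ZD F q * ZbD H q - I * (F q * TD H q) + I * (H q * TD F q)) Ω := fun q hq => by
    have h := ZD_ZbD_sub_ZbD_ZD hΩ hg hq
    rw [ZD_congr hΩ hZbg hq, ZbD_congr hΩ hZg hq, ZD_const_mul _ ((dF hq).fun_mul (db hq)),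
      ZbD_const_mul _ ((dH hq).fun_mul (da hq)), ZD_mul (dF hq) (db hq), ZbD_mul (dH hq) (da hq),
      hTH hq, hTF hq] at h
    linear_combination (-I / 2) * h + (TD g q - ZD F q * ZbD H q + I * F q * TD H q
      - I * H q * TD F q) * I_sq
  have h := ZD_TD_comm hΩ hg hp
  have hTZH : TD (ZD H) p = 0 := by rw [TD_congr hΩ hZH hp, TD_zero]
  have hZH0 : ZD H p = 0 := hZH hp
  rw [ZD_congr hΩ hTg hp, TD_congr hΩ hZg hp, TD_const_mul _ ((dH hp).fun_mul (da hp)),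
    TD_mul (dH hp) (da hp),
    ZD_add (((da hp).fun_mul (db hp)).fun_sub (((dF hp).fun_mul dTH).const_mul I))
      (((dH hp).fun_mul dTF).const_mul I),
    ZD_sub ((da hp).fun_mul (db hp)) (((dF hp).fun_mul dTH).const_mul I),
    ZD_const_mul _ ((dF hp).fun_mul dTH), ZD_const_mul _ ((dH hp).fun_mul dTF),
    ZD_mul (da hp) (db hp), ZD_mul (dF hp) dTH, ZD_mul (dH hp) dTF,
    ZD_TD_comm hΩ hH hp, ZD_TD_comm hΩ hF hp, hTZH, hZH0, hTH hp] at h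
  rw [hTH hp]
  linear_combination h

/-- A pair of orthogonal vectors of equal length in the plane, positively oriented. -/
theorem eq_rotation_of_conformal {x₁ x₂ y₁ y₂ : ℝ} (hJ : 0 < x₁ * y₂ - y₁ * x₂)
    (hn : x₁ ^ 2 + x₂ ^ 2 = y₁ ^ 2 + y₂ ^ 2) (ho : x₁ * y₁ + x₂ * y₂ = 0) :
    y₁ = -x₂ ∧ y₂ = x₁ := by
  have h : (x₁ * y₂ - y₁ * x₂) ^ 2 = (x₁ ^ 2 + x₂ ^ 2) ^ 2 := by
    linear_combination (-(x₁ ^ 2 + x₂ ^ 2)) * hn - (x₁ * y₁ + x₂ * y₂) * ho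
  have h' : x₁ * y₂ - y₁ * x₂ = x₁ ^ 2 + x₂ ^ 2 :=
    (sq_eq_sq₀ hJ.le (by positivity)).mp h
  constructor <;> nlinarith [sq_nonneg (y₁ + x₂), sq_nonneg (y₂ - x₁)]

section Complexification

variable {Ω : Set Heis} {f1 f2 f3 u : Heis → ℝ} {p : Heis}

theorem fderiv_ofReal_apply (hu : DifferentiableAt ℝ u p) (w : Heis) :
    fderiv ℝ (fun q => (u q : ℂ)) p w = (fderiv ℝ u p w : ℂ) := by
  have h : HasFDerivAt (fun q => (u q : ℂ)) (Complex.ofRealCLM ∘L fderiv ℝ u p) p :=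
    Complex.ofRealCLM.hasFDerivAt.comp p hu.hasFDerivAt
  rw [h.fderiv]
  simp

theorem fderiv_CF_apply (h1 : DifferentiableAt ℝ f1 p) (h2 : DifferentiableAt ℝ f2 p) (w : Heis) :
    fderiv ℝ (CF f1 f2) p w = fderiv ℝ f1 p w + fderiv ℝ f2 p w * I := by
  have h : HasFDerivAt (CF f1 f2) _ p :=
    (Complex.ofRealCLM.hasFDerivAt.comp p h1.hasFDerivAt).add
      ((Complex.ofRealCLM.hasFDerivAt.comp p h2.hasFDerivAt).mul_const I)
  rw [h.fderiv]
  simp [mul_comm]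

theorem ContDiffOn.ofReal (hu : ContDiffOn ℝ (⊤ : ℕ∞) u Ω) :
    ContDiffOn ℝ (⊤ : ℕ∞) (fun q => (u q : ℂ)) Ω :=
  Complex.ofRealCLM.contDiff.comp_contDiffOn hu

theorem ContDiffOn.conj {F : Heis → ℂ} (hF : ContDiffOn ℝ (⊤ : ℕ∞) F Ω) :
    ContDiffOn ℝ (⊤ : ℕ∞) (fun q => (starRingEnd ℂ) (F q)) Ω :=
  Complex.conjCLE.contDiff.comp_contDiffOn hF

theorem ContDiffOn.CF (h1 : ContDiffOn ℝ (⊤ : ℕ∞) f1 Ω) (h2 : ContDiffOn ℝ (⊤ : ℕ∞) f2 Ω) :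
    ContDiffOn ℝ (⊤ : ℕ∞) (CF f1 f2) Ω :=
  h1.ofReal.add (h2.ofReal.mul contDiffOn_const)

end Complexification

namespace ConformalOn

variable {Ω : Set Heis} {f1 f2 f3 : Heis → ℝ} {p : Heis}

theorem YD_eq (h : ConformalOn f1 f2 f3 Ω) (hp : p ∈ Ω) :
    YD f1 p = -XD f2 p ∧ YD f2 p = XD f1 p :=
  eq_rotation_of_conformal (h.2.2.2.2.1 p hp) (h.2.2.2.2.2 p hp).1 (h.2.2.2.2.2 p hp).2

theorem contDiffOn_CF (h : ConformalOn f1 f2 f3 Ω) : ContDiffOn ℝ (⊤ : ℕ∞) (CF f1 f2) Ω :=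
  h.1.CF h.2.1

theorem XD_CF (hΩ : IsOpen Ω) (h : ConformalOn f1 f2 f3 Ω) (hp : p ∈ Ω) :
    XD (CF f1 f2) p = XD f1 p + XD f2 p * I :=
  fderiv_CF_apply (h.1.differentiableAt_of_isOpen hΩ hp)
    (h.2.1.differentiableAt_of_isOpen hΩ hp) _

theorem YD_CF (hΩ : IsOpen Ω) (h : ConformalOn f1 f2 f3 Ω) (hp : p ∈ Ω) :
    YD (CF f1 f2) p = -XD f2 p + XD f1 p * I := by
  have e : YD (CF f1 f2) p = YD f1 p + YD f2 p * I :=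
    fderiv_CF_apply (h.1.differentiableAt_of_isOpen hΩ hp)
      (h.2.1.differentiableAt_of_isOpen hΩ hp) _
  rw [e, (h.YD_eq hp).1, (h.YD_eq hp).2, ofReal_neg]

theorem ZbD_CF (hΩ : IsOpen Ω) (h : ConformalOn f1 f2 f3 Ω) (hp : p ∈ Ω) :
    ZbD (CF f1 f2) p = 0 := by
  rw [ZbD, h.XD_CF hΩ hp, h.YD_CF hΩ hp]
  linear_combination (XD f1 p / 2 : ℂ) * I_sq

theorem ZD_CF (hΩ : IsOpen Ω) (h : ConformalOn f1 f2 f3 Ω) (hp : p ∈ Ω) :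
    ZD (CF f1 f2) p = XD f1 p + XD f2 p * I := by
  rw [ZD, h.XD_CF hΩ hp, h.YD_CF hΩ hp]
  linear_combination (-XD f1 p / 2 : ℂ) * I_sq

theorem JF_eq (hΩ : IsOpen Ω) (h : ConformalOn f1 f2 f3 Ω) (hp : p ∈ Ω) :
    (JF f1 f2 p : ℂ) = ZD (CF f1 f2) p * (starRingEnd ℂ) (ZD (CF f1 f2) p) := by
  rw [h.ZD_CF hΩ hp, JF, (h.YD_eq hp).1, (h.YD_eq hp).2]
  simp only [map_add, map_mul, conj_ofReal, conj_I]
  push_cast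
  linear_combination (XD f2 p ^ 2 : ℂ) * I_sq

theorem ZD_CF_ne_zero (hΩ : IsOpen Ω) (h : ConformalOn f1 f2 f3 Ω) (hp : p ∈ Ω) :
    ZD (CF f1 f2) p ≠ 0 := by
  intro h0
  have hJ := h.JF_eq hΩ hp
  rw [h0, zero_mul, ofReal_eq_zero] at hJ
  exact (h.2.2.2.2.1 p hp).ne' hJ

theorem XD_YD_Cplx (hΩ : IsOpen Ω) (h : ConformalOn f1 f2 f3 Ω) (hp : p ∈ Ω) :
    XD (Cplx f3) p = 2 * f2 p * XD f1 p - 2 * f1 p * XD f2 p ∧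
      YD (Cplx f3) p = -2 * f2 p * XD f2 p - 2 * f1 p * XD f1 p := by
  have d3 := h.2.2.1.differentiableAt_of_isOpen hΩ hp
  have eX : XD (Cplx f3) p = ((XD f3 p : ℝ) : ℂ) := fderiv_ofReal_apply d3 _
  have eY : YD (Cplx f3) p = ((YD f3 p : ℝ) : ℂ) := fderiv_ofReal_apply d3 _
  obtain ⟨cX, cY⟩ := h.2.2.2.1 p hp
  rw [(h.YD_eq hp).1, (h.YD_eq hp).2] at cY
  have rX : XD f3 p = 2 * f2 p * XD f1 p - 2 * f1 p * XD f2 p := by linarith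
  have rY : YD f3 p = -2 * f2 p * XD f2 p - 2 * f1 p * XD f1 p := by linarith
  rw [eX, eY, rX, rY]
  constructor <;> push_cast <;> ring

theorem ZD_Cplx (hΩ : IsOpen Ω) (h : ConformalOn f1 f2 f3 Ω) (hp : p ∈ Ω) :
    ZD (Cplx f3) p = I * ((starRingEnd ℂ) (CF f1 f2 p) * ZD (CF f1 f2) p) := by
  rw [h.ZD_CF hΩ hp, ZD, (h.XD_YD_Cplx hΩ hp).1, (h.XD_YD_Cplx hΩ hp).2]
  simp only [CF, map_add, map_mul, conj_ofReal, conj_I]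
  linear_combination
    (f2 p * XD f1 p - f1 p * XD f2 p + f2 p * XD f2 p * I : ℂ) * I_sq

theorem ZbD_Cplx (hΩ : IsOpen Ω) (h : ConformalOn f1 f2 f3 Ω) (hp : p ∈ Ω) :
    ZbD (Cplx f3) p = -I * (CF f1 f2 p * (starRingEnd ℂ) (ZD (CF f1 f2) p)) := by
  rw [h.ZD_CF hΩ hp, ZbD, (h.XD_YD_Cplx hΩ hp).1, (h.XD_YD_Cplx hΩ hp).2]
  simp only [CF, map_add, map_mul, conj_ofReal, conj_I]
  linear_combination
    (f2 p * XD f1 p - f1 p * XD f2 p - f2 p * XD f2 p * I : ℂ) * I_sq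

/-- With `a = ZF`, the contact equations force `ā Za = -2 a Zā`. -/
theorem ZD_ZD_CF (hΩ : IsOpen Ω) (h : ConformalOn f1 f2 f3 Ω) (hp : p ∈ Ω) :
    ZD (ZD (CF f1 f2)) p * (starRingEnd ℂ) (ZD (CF f1 f2) p)
      = -2 * (ZD (CF f1 f2) p * (starRingEnd ℂ) (ZbD (ZD (CF f1 f2)) p)) := by
  have hF := h.contDiffOn_CF
  have dF {q} (hq : q ∈ Ω) := hF.differentiableAt_of_isOpen hΩ hq
  have hb : Set.EqOn (ZbD fun q => (starRingEnd ℂ) (CF f1 f2 q))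
      (fun q => (starRingEnd ℂ) (ZD (CF f1 f2) q)) Ω := fun q hq => ZbD_conj (dF hq)
  have key := ZD_ZD_mul_of_contact hΩ hF hF.conj h.2.2.1.ofReal
    (fun q hq => h.ZbD_CF hΩ hq)
    (fun q hq => by rw [ZD_conj (dF hq), h.ZbD_CF hΩ hq, map_zero])
    (fun q hq => h.ZD_Cplx hΩ hq)
    (fun q hq => by beta_reduce; rw [ZbD_conj (dF hq)]; exact h.ZbD_Cplx hΩ hq) hp
  rwa [ZD_congr hΩ hb hp, ZbD_conj (dF hp),
    ZD_conj ((hF.ZD hΩ).differentiableAt_of_isOpen hΩ hp)] at key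

theorem contDiffOn_JF (hΩ : IsOpen Ω) (h : ConformalOn f1 f2 f3 Ω) :
    ContDiffOn ℝ (⊤ : ℕ∞) (JF f1 f2) Ω :=
  ((h.1.XD hΩ).mul (h.2.1.YD hΩ)).sub ((h.1.YD hΩ).mul (h.2.1.XD hΩ))

theorem contDiffOn_half_log_JF (hΩ : IsOpen Ω) (h : ConformalOn f1 f2 f3 Ω) :
    ContDiffOn ℝ (⊤ : ℕ∞) (Cplx fun q => (1 / 2) * Real.log (JF f1 f2 q)) Ω :=
  (contDiffOn_const.mul
    ((h.contDiffOn_JF hΩ).log fun q hq => (h.2.2.2.2.1 q hq).ne')).ofReal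

/-- `φ = (1/2) log (a ā)` on `Ω`, where `a = ZF`. -/
theorem half_log_JF_eqOn (hΩ : IsOpen Ω) (h : ConformalOn f1 f2 f3 Ω) :
    Set.EqOn (Cplx fun q => (1 / 2) * Real.log (JF f1 f2 q))
      (fun q => (1 / 2 : ℂ) *
        Complex.log (ZD (CF f1 f2) q * (starRingEnd ℂ) (ZD (CF f1 f2) q))) Ω := fun q hq => by
  simp only [Cplx]
  rw [← h.JF_eq hΩ hq, ← ofReal_log (h.2.2.2.2.1 q hq).le]
  push_cast
  rfl

theorem ZD_CF_mul_conj_mem_slitPlane (hΩ : IsOpen Ω) (h : ConformalOn f1 f2 f3 Ω) (hp : p ∈ Ω) :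
    ZD (CF f1 f2) p * (starRingEnd ℂ) (ZD (CF f1 f2) p) ∈ slitPlane := by
  rw [← h.JF_eq hΩ hp]
  exact ofReal_mem_slitPlane.mpr (h.2.2.2.2.1 p hp)

theorem ZD_half_log_JF (hΩ : IsOpen Ω) (h : ConformalOn f1 f2 f3 Ω) (hp : p ∈ Ω) :
    4 * ZD (Cplx fun q => (1 / 2) * Real.log (JF f1 f2 q)) p
      = ZD (ZD (CF f1 f2)) p / ZD (CF f1 f2) p := by
  have ha := h.contDiffOn_CF.ZD hΩ
  have da := ha.differentiableAt_of_isOpen hΩ hp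
  have db := ha.conj.differentiableAt_of_isOpen hΩ hp
  have hs := h.ZD_CF_mul_conj_mem_slitPlane hΩ hp
  have hne := h.ZD_CF_ne_zero hΩ hp
  have hne' : (starRingEnd ℂ) (ZD (CF f1 f2) p) ≠ 0 := (map_ne_zero _).mpr hne
  have hd := (hasStrictFDerivAt_log_real hs).hasFDerivAt.differentiableAt.fun_comp' p
    (da.fun_mul db)
  rw [ZD_congr hΩ (h.half_log_JF_eqOn hΩ) hp, ZD_const_mul _ hd, ZD_log (da.fun_mul db) hs,
    ZD_mul da db, ZD_conj da]
  field_simp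
  linear_combination 2 * h.ZD_ZD_CF hΩ hp

theorem ZbD_half_log_JF (hΩ : IsOpen Ω) (h : ConformalOn f1 f2 f3 Ω) (hp : p ∈ Ω) :
    -2 * ZbD (Cplx fun q => (1 / 2) * Real.log (JF f1 f2 q)) p
      = ZbD (ZD (CF f1 f2)) p / ZD (CF f1 f2) p := by
  have ha := h.contDiffOn_CF.ZD hΩ
  have da := ha.differentiableAt_of_isOpen hΩ hp
  have db := ha.conj.differentiableAt_of_isOpen hΩ hp
  have hs := h.ZD_CF_mul_conj_mem_slitPlane hΩ hp
  have hne := h.ZD_CF_ne_zero hΩ hp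
  have hne' : (starRingEnd ℂ) (ZD (CF f1 f2) p) ≠ 0 := (map_ne_zero _).mpr hne
  have hd := (hasStrictFDerivAt_log_real hs).hasFDerivAt.differentiableAt.fun_comp' p
    (da.fun_mul db)
  have key := congrArg (starRingEnd ℂ) (h.ZD_ZD_CF hΩ hp)
  simp only [map_mul, map_neg, conj_conj, Complex.conj_ofNat] at key
  rw [ZbD_congr hΩ (h.half_log_JF_eqOn hΩ) hp, ZbD_const_mul _ hd, ZbD_log (da.fun_mul db) hs,
    ZbD_mul da db, ZbD_conj da]
  field_simp
  linear_combination -key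

end ConformalOn

/-- for a smooth conformal map f, the function φ = (1/2)·ln J_F is
CR-pluriharmonic on Ω, i.e. Z²Z̄φ = 0 on Ω. -/
theorem stmt_4 (Ω : Set Heis) (hΩ : IsOpen Ω) (f1 f2 f3 : Heis → ℝ)
    (hconf : ConformalOn f1 f2 f3 Ω) :
    ∀ p ∈ Ω, ZD (ZD (ZbD (Cplx (fun q => (1 / 2) * Real.log (JF f1 f2 q))))) p = 0 := by
  intro p hp
  -- On a neighbourhood of `p`, a branch of `log ZF` is a potential for `φ`.
  set a := ZD (CF f1 f2)
  have ha : ContDiffOn ℝ (⊤ : ℕ∞) a Ω := hconf.contDiffOn_CF.ZD hΩ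
  have hap : a p ≠ 0 := hconf.ZD_CF_ne_zero hΩ hp
  have hc : ContDiffOn ℝ (⊤ : ℕ∞) (fun q => (a p)⁻¹ * a q) Ω := contDiffOn_const.mul ha
  set U := Ω ∩ (fun q => (a p)⁻¹ * a q) ⁻¹' slitPlane
  have hU : IsOpen U := hc.continuousOn.isOpen_inter_preimage hΩ isOpen_slitPlane
  have hpU : p ∈ U := ⟨hp, by simp [hap]⟩
  have da {q} (hq : q ∈ U) := ha.differentiableAt_of_isOpen hΩ hq.1
  refine ZD_ZD_ZbD_eq_zero_of_potential hU (L := fun q => Complex.log ((a p)⁻¹ * a q))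
    ((hconf.contDiffOn_half_log_JF hΩ).mono Set.inter_subset_left)
    (fun q hq => ContDiffAt.comp_contDiffWithinAt (g := Complex.log) q
      ((contDiffAt_log hq.2).restrict_scalars ℝ) (hc.mono Set.inter_subset_left q hq)) (fun q hq => ?_) (fun q hq => ?_) hpU
  · rw [ZD_log ((da hq).const_mul _) hq.2, ZD_const_mul _ (da hq),
      mul_div_mul_left _ _ (inv_ne_zero hap)]
    exact (hconf.ZD_half_log_JF hΩ hq.1).symm
  · rw [ZbD_log ((da hq).const_mul _) hq.2, ZbD_const_mul _ (da hq),
      mul_div_mul_left _ _ (inv_ne_zero hap)]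
    exact (hconf.ZbD_half_log_JF hΩ hq.1).symm
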